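/- (Lemma 4.3) Fix an integer d ≥ 1, m > 0 and x, y ∈ ℝ^d with x ≠ y. The family of finite measures {W_{x,y,a} : 0 < a < 1} on Γ̃(x,y) is tight: for every η > 0 there exists a compact set K ⊆ Γ̃(x,y) such that W_{x,y,a}(Γ̃(x,y) ∖ K) < η for all 0 < a < 1. -/

import Mathlib

open MeasureTheory Filter Topology Real Set
open scoped RealInnerProductSpace ENNReal unitInterval

noncomputable section

/-- `ℝ^d` as a Euclidean space. -/
abbrev Ed (d : ℕ) := EuclideanSpace ℝ (Fin d)

/-- The space of continuous paths `[0,1] → ℝ^d`, with the uniform metric. -/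
abbrev PathSp (d : ℕ) := C(unitInterval, Ed d)

instance (d : ℕ) : MeasurableSpace (PathSp d) := borel _
instance (d : ℕ) : BorelSpace (PathSp d) := ⟨rfl⟩

/-- Evaluation of a path at a real time, clamped to `[0,1]`. -/
def evalAt {d : ℕ} (ω : PathSp d) (t : ℝ) : Ed d := ω (Set.projIcc 0 1 zero_le_one t)

/-- `Ω(x)`: continuous paths starting at `x`. -/
abbrev Omega1 {d : ℕ} (x : Ed d) := {ω : PathSp d // ω 0 = x}

/-- `Ω(x,y)`: continuous paths from `x` to `y`. -/
abbrev Omega2 {d : ℕ} (x y : Ed d) := {ω : PathSp d // ω 0 = x ∧ ω 1 = y}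

/-- clamp a real number to `[0,1]`. -/
def clamp01 (r : ℝ) : ℝ := min 1 (max 0 r)

lemma clamp01_of_nonpos {r : ℝ} (h : r ≤ 0) : clamp01 r = 0 := by
  rw [clamp01, max_eq_left h, min_eq_right zero_le_one]

lemma clamp01_of_one_le {r : ℝ} (h : 1 ≤ r) : clamp01 r = 1 := by
  rw [clamp01, max_eq_right (zero_le_one.trans h), min_eq_left h]

lemma clamp01_continuous : Continuous clamp01 :=
  continuous_const.min (continuous_const.max continuous_id)

/-- The piecewise linear path starting at `x` with `N` steps given by the increments `v i`,
the `i`-th step being linearly parametrized by `[i/N, (i+1)/N]`. -/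
def pwLinE {d : ℕ} (x : Ed d) (N : ℕ) (v : Fin N → Ed d) : PathSp d :=
  ⟨fun t => x + ∑ i : Fin N, clamp01 ((N : ℝ) * (t : ℝ) - ((i : ℕ) : ℝ)) • v i, by
    refine continuous_const.add (continuous_finset_sum _ fun i _ => ?_)
    exact ((clamp01_continuous.comp
      ((continuous_const.mul continuous_subtype_val).sub continuous_const)).smul
      continuous_const)⟩

lemma pwLinE_zero {d : ℕ} (x : Ed d) (N : ℕ) (v : Fin N → Ed d) :
    pwLinE x N v 0 = x := by
  show x + ∑ i : Fin N, clamp01 ((N : ℝ) * ((0 : unitInterval) : ℝ) - ((i : ℕ) : ℝ)) • v i = x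
  have h : ∀ i : Fin N, clamp01 ((N : ℝ) * ((0 : unitInterval) : ℝ) - ((i : ℕ) : ℝ)) = 0 := by
    intro i
    apply clamp01_of_nonpos
    have h0 : ((0 : unitInterval) : ℝ) = 0 := rfl
    rw [h0, mul_zero, zero_sub]
    exact neg_nonpos.mpr (Nat.cast_nonneg (i : ℕ))
  simp only [h, zero_smul, Finset.sum_const_zero, add_zero]

lemma pwLinE_one {d : ℕ} (x : Ed d) (N : ℕ) (v : Fin N → Ed d) :
    pwLinE x N v 1 = x + ∑ i : Fin N, v i := by
  show x + ∑ i : Fin N, clamp01 ((N : ℝ) * ((1 : unitInterval) : ℝ) - ((i : ℕ) : ℝ)) • v i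
      = x + ∑ i : Fin N, v i
  have h : ∀ i : Fin N, clamp01 ((N : ℝ) * ((1 : unitInterval) : ℝ) - ((i : ℕ) : ℝ)) = 1 := by
    intro i
    apply clamp01_of_one_le
    have h1 : ((1 : unitInterval) : ℝ) = 1 := rfl
    have h2 : ((i : ℕ) : ℝ) + 1 ≤ (N : ℝ) := by
      exact_mod_cast Nat.succ_le_of_lt i.isLt
    rw [h1, mul_one]; linarith
  simp only [h, one_smul]

/-- Piecewise linear element of `Ω(x)` with increments `v`. -/
def pwLin1 {d : ℕ} (x : Ed d) (N : ℕ) (v : Fin N → Ed d) : Omega1 x :=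
  ⟨pwLinE x N v, pwLinE_zero x N v⟩

/-- Piecewise linear element of `Ω(x,y)` with increments `v` summing to `y - x`. -/
def pwLin2 {d : ℕ} (x y : Ed d) (N : ℕ) (v : Fin N → Ed d)
    (h : x + ∑ i : Fin N, v i = y) : Omega2 x y :=
  ⟨pwLinE x N v, pwLinE_zero x N v, by rw [pwLinE_one, h]⟩

/-- the point preceding `x_i` in the list `x, x_1, …, x_N`. -/
def prevPt {d : ℕ} (x : Ed d) {N : ℕ} (xs : Fin N → Ed d) (i : Fin N) : Ed d :=
  if (i : ℕ) = 0 then x else xs ⟨(i : ℕ) - 1, lt_of_le_of_lt (Nat.pred_le _) i.isLt⟩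

/-- The discrete measure `W_{x,a,N}`, i.e. the measure
`∏_{i=1}^N (2πa²)^{-d/2} exp(-|x_i - x_{i-1}|²/(2a²)) dx_1 … dx_N` (with `x_0 = x`)
on `N`-step piecewise linear paths, placed on `{a²N} × Ω(x) ⊆ ℝ × Ω(x)`.
For `N = 0` this is the Dirac measure at `(0, constant path at x)`. -/
def WxaN {d : ℕ} (x : Ed d) (a : ℝ) (N : ℕ) : Measure (ℝ × Omega1 x) :=
  Measure.map
    (fun xs : Fin N → Ed d =>
      ((a ^ 2 * N : ℝ), pwLin1 x N fun i => xs i - prevPt x xs i))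
    (volume.withDensity fun xs : Fin N → Ed d =>
      ENNReal.ofReal (∏ i : Fin N,
        (2 * π * a ^ 2) ^ (-(d : ℝ) / 2) *
          Real.exp (-‖xs i - prevPt x xs i‖ ^ 2 / (2 * a ^ 2))))

/-- The approximating probability measure
`W_{x,a} = (1 - e^{-m²a²/2}) Σ_{N=0}^∞ e^{-m²a²N/2} W_{x,a,N}`. -/
def Wxa {d : ℕ} (x : Ed d) (m a : ℝ) : Measure (ℝ × Omega1 x) :=
  ENNReal.ofReal (1 - Real.exp (-m ^ 2 * a ^ 2 / 2)) •
    Measure.sum fun N : ℕ =>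
      ENNReal.ofReal (Real.exp (-m ^ 2 * a ^ 2 * N / 2)) • WxaN x a N

/-- The lattice step of length `a` in direction `p.1`, forwards or backwards
according to `p.2`. -/
def stepVec {d : ℕ} (a : ℝ) (p : Fin d × Bool) : Ed d :=
  (if p.2 then a else -a) • EuclideanSpace.single p.1 (1 : ℝ)

/-- The normalized counting measure `V'_{x,a,N}` giving mass `(2d)^{-N}` to each
(piecewise linearly parametrized) `N`-step nearest-neighbour lattice path in `x + aℤ^d`
starting at `x`.  For `N = 0` it is the Dirac measure at the constant path. -/
def VxaN {d : ℕ} (x : Ed d) (a : ℝ) (N : ℕ) : Measure (Omega1 x) :=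
  Measure.sum fun s : Fin N → Fin d × Bool =>
    (((2 * d : ℕ) : ℝ≥0∞) ^ N)⁻¹ •
      Measure.dirac (pwLin1 x N fun i => stepVec a (s i))

/-- The approximating probability measure
`V'_{x,a} = (1 - e^{-m²a²/(2d)}) Σ_{N=0}^∞ e^{-m²a²N/(2d)} V'_{x,a,N}`. -/
def Vxa {d : ℕ} (x : Ed d) (m a : ℝ) : Measure (Omega1 x) :=
  ENNReal.ofReal (1 - Real.exp (-m ^ 2 * a ^ 2 / (2 * d))) •
    Measure.sum fun N : ℕ =>
      ENNReal.ofReal (Real.exp (-m ^ 2 * a ^ 2 * N / (2 * d))) • VxaN x a N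

/-- `Wt` is the family of Wiener measures `(W_x^t)_{t>0}` on `Ω(x)`:
each `W_x^t` is a Borel probability measure, characterized by the characteristic
functions of its finite dimensional distributions
`∫ exp(i Σ_j ξ_j·ω(t_j)) dW_x^t = exp(-(t/2) Σ_j (t_j - t_{j-1}) |ξ_j + ⋯ + ξ_n|²
+ i x·(ξ_1 + ⋯ + ξ_n))` for all `0 = t_0 < t_1 < ⋯ < t_n ≤ 1`. -/
def IsWienerFamily {d : ℕ} (x : Ed d) (Wt : ℝ → Measure (Omega1 x)) : Prop :=
  ∀ t : ℝ, 0 < t → (IsProbabilityMeasure (Wt t) ∧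
    ∀ (n : ℕ) (ts : ℕ → ℝ), ts 0 = 0 → (∀ i < n, ts i < ts (i + 1)) → ts n ≤ 1 →
      ∀ ξ : Fin n → Ed d,
        (∫ ω : Omega1 x, Complex.exp (Complex.I *
            ((∑ i : Fin n, ⟪ξ i, evalAt ω.1 (ts ((i : ℕ) + 1))⟫ : ℝ) : ℂ)) ∂(Wt t))
          = Complex.exp
              (((-(t / 2) * ∑ i : Fin n,
                  (ts ((i : ℕ) + 1) - ts (i : ℕ)) * ‖∑ j ∈ Finset.Ici i, ξ j‖ ^ 2 : ℝ) : ℂ)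
                + Complex.I * ((⟪∑ j, ξ j, x⟫ : ℝ) : ℂ)))


/-- the sequence of points `x, vs 0, …, vs (N-1), y` (with value `y` from index `N+1` on). -/
def pinPts {d : ℕ} (x y : Ed d) {N : ℕ} (vs : Fin N → Ed d) (j : ℕ) : Ed d :=
  if h0 : j = 0 then x else if h : j ≤ N then vs ⟨j - 1, by omega⟩ else y

lemma pinPts_zero {d : ℕ} (x y : Ed d) {N : ℕ} (vs : Fin N → Ed d) :
    pinPts x y vs 0 = x := by simp [pinPts]

lemma pinPts_last {d : ℕ} (x y : Ed d) {N : ℕ} (vs : Fin N → Ed d) :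
    pinPts x y vs (N + 1) = y := by
  have h1 : ¬(N + 1 = 0) := Nat.succ_ne_zero N
  have h2 : ¬(N + 1 ≤ N) := by omega
  simp [pinPts, h1, h2]

lemma pin_telescope {d : ℕ} (x y : Ed d) {N : ℕ} (vs : Fin N → Ed d) :
    x + ∑ i : Fin (N + 1), (pinPts x y vs ((i : ℕ) + 1) - pinPts x y vs (i : ℕ)) = y := by
  rw [Fin.sum_univ_eq_sum_range (fun j => pinPts x y vs (j + 1) - pinPts x y vs j) (N + 1)]
  rw [Finset.sum_range_sub (fun j => pinPts x y vs j) (N + 1)]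
  rw [pinPts_zero, pinPts_last]
  abel

/-- The discrete measure `W_{x,y,a,N+1}`, i.e. the measure
`∏_{i=1}^{N+1} (2πa²)^{-d/2} exp(-|x_i - x_{i-1}|²/(2a²)) dx_1 … dx_N`
(with `x_0 = x`, `x_{N+1} = y`) on `(N+1)`-step piecewise linear paths from `x` to `y`,
placed on `{a²(N+1)} × Ω(x,y) ⊆ ℝ × Ω(x,y)`.  For `N = 0` this is the point mass of
weight `(2πa²)^{-d/2} e^{-|x-y|²/(2a²)}` at `(a², linear path from x to y)`. -/
def WxyaN {d : ℕ} (x y : Ed d) (a : ℝ) (N : ℕ) : Measure (ℝ × Omega2 x y) :=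
  Measure.map
    (fun vs : Fin N → Ed d =>
      ((a ^ 2 * (N + 1) : ℝ),
        pwLin2 x y (N + 1) (fun i => pinPts x y vs ((i : ℕ) + 1) - pinPts x y vs (i : ℕ))
          (pin_telescope x y vs)))
    (volume.withDensity fun vs : Fin N → Ed d =>
      ENNReal.ofReal (∏ i : Fin (N + 1),
        (2 * π * a ^ 2) ^ (-(d : ℝ) / 2) *
          Real.exp (-‖pinPts x y vs ((i : ℕ) + 1) - pinPts x y vs (i : ℕ)‖ ^ 2 /
            (2 * a ^ 2))))

/-- The approximating measure
`W_{x,y,a} = (1 - e^{-m²a²/2}) Σ_{N=1}^∞ e^{-m²a²N/2} W_{x,y,a,N}`. -/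
def Wxya {d : ℕ} (x y : Ed d) (m a : ℝ) : Measure (ℝ × Omega2 x y) :=
  ENNReal.ofReal (1 - Real.exp (-m ^ 2 * a ^ 2 / 2)) •
    Measure.sum fun N : ℕ =>
      ENNReal.ofReal (Real.exp (-m ^ 2 * a ^ 2 * (N + 1) / 2)) • WxyaN x y a N

/-- The measure `V'_{x,y,a,N}` giving mass `a^{-d} (2d)^{-N}` to each
(piecewise linearly parametrized) `N`-step nearest-neighbour lattice path
in `x + aℤ^d` from `x` to `y`. -/
def VxyaN {d : ℕ} (x y : Ed d) (a : ℝ) (N : ℕ) : Measure (Omega2 x y) :=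
  Measure.sum fun s : {s : Fin N → Fin d × Bool // x + ∑ i, stepVec a (s i) = y} =>
    (ENNReal.ofReal (a ^ (-(d : ℝ))) * (((2 * d : ℕ) : ℝ≥0∞) ^ N)⁻¹) •
      Measure.dirac (pwLin2 x y N (fun i => stepVec a (s.1 i)) s.2)

/-- The approximating measure
`V'_{x,y,a} = (1 - e^{-m²a²/(2d)}) Σ_{N=1}^∞ e^{-m²a²N/(2d)} V'_{x,y,a,N}`. -/
def Vxya {d : ℕ} (x y : Ed d) (m a : ℝ) : Measure (Omega2 x y) :=
  ENNReal.ofReal (1 - Real.exp (-m ^ 2 * a ^ 2 / (2 * d))) •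
    Measure.sum fun N : ℕ =>
      ENNReal.ofReal (Real.exp (-m ^ 2 * a ^ 2 * (N + 1) / (2 * d))) • VxyaN x y a (N + 1)

/-- `Wt` is the family of pinned Wiener measures `(W_{x,y}^t)_{t>0}` on `Ω(x,y)`:
finite Borel measures characterized by the characteristic functions of their finite
dimensional distributions: for `0 = t_0 < t_1 < ⋯ < t_n < 1`, with `η_i = ξ_i + ⋯ + ξ_n`,
`∫ exp(i Σ_j ξ_j·ω(t_j)) dW_{x,y}^t = (2πt)^{-d/2} e^{-|x-y|²/(2t)} ·
exp(-(t/2)(Σ_j (t_j - t_{j-1})|η_j|² - |Σ_j t_j ξ_j|²) + i Σ_j ((1-t_j)x + t_j y)·ξ_j)`;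
in particular (`n = 0`) the total mass is the heat kernel `(2πt)^{-d/2} e^{-|x-y|²/(2t)}`. -/
def IsPinnedWienerFamily {d : ℕ} (x y : Ed d) (Wt : ℝ → Measure (Omega2 x y)) : Prop :=
  ∀ t : ℝ, 0 < t → (IsFiniteMeasure (Wt t) ∧
    ∀ (n : ℕ) (ts : ℕ → ℝ), ts 0 = 0 → (∀ i < n, ts i < ts (i + 1)) → ts n < 1 →
      ∀ ξ : Fin n → Ed d,
        (∫ ω : Omega2 x y, Complex.exp (Complex.I *
            ((∑ i : Fin n, ⟪ξ i, evalAt ω.1 (ts ((i : ℕ) + 1))⟫ : ℝ) : ℂ)) ∂(Wt t))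
          = (((2 * π * t) ^ (-(d : ℝ) / 2) * Real.exp (-‖x - y‖ ^ 2 / (2 * t)) : ℝ) : ℂ) *
            Complex.exp
              (((-(t / 2) *
                  ((∑ i : Fin n,
                      (ts ((i : ℕ) + 1) - ts (i : ℕ)) * ‖∑ j ∈ Finset.Ici i, ξ j‖ ^ 2)
                    - ‖∑ i : Fin n, ts ((i : ℕ) + 1) • ξ i‖ ^ 2) : ℝ) : ℂ)
                + Complex.I *
                  ((∑ i : Fin n,
                    ⟪ξ i, (1 - ts ((i : ℕ) + 1)) • x + ts ((i : ℕ) + 1) • y⟫ : ℝ) : ℂ)))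

/-- The heat kernel `(2πt)^{-d/2} exp(-|v|²/(2t))` on `ℝ^d`. -/
def heatKernel {d : ℕ} (t : ℝ) (v : Ed d) : ℝ :=
  (2 * π * t) ^ (-(d : ℝ) / 2) * Real.exp (-‖v‖ ^ 2 / (2 * t))

lemma heatKernel_nonneg {d : ℕ} {t : ℝ} (ht : 0 ≤ t) (v : Ed d) : 0 ≤ heatKernel t v := by
  unfold heatKernel; positivity

lemma heatKernel_le {d : ℕ} {t : ℝ} (ht : 0 ≤ t) (v : Ed d) :
    heatKernel t v ≤ (2 * π * t) ^ (-(d : ℝ) / 2) := by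
  unfold heatKernel
  refine mul_le_of_le_one_right (by positivity) (Real.exp_le_one_iff.2 ?_)
  rw [neg_div]
  exact neg_nonpos.2 (by positivity)

lemma continuous_heatKernel {d : ℕ} (t : ℝ) : Continuous (heatKernel t : Ed d → ℝ) := by
  unfold heatKernel; fun_prop

lemma lintegral_exp_neg_mul_sq_norm {d : ℕ} {b : ℝ} (hb : 0 < b) :
    ∫⁻ v : Ed d, ENNReal.ofReal (Real.exp (-b * ‖v‖ ^ 2)) =
      ENNReal.ofReal ((π / b) ^ ((d : ℝ) / 2)) := by
  have h := GaussianFourier.integral_rexp_neg_mul_sq_norm (V := Ed d) hb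
  have hfin : (Module.finrank ℝ (Ed d) : ℝ) = d := by simp
  rw [hfin] at h
  rw [← h, ofReal_integral_eq_lintegral_ofReal _ (ae_of_all _ fun v => (Real.exp_pos _).le)]
  by_contra hni
  rw [integral_undef hni] at h
  exact absurd h (Real.rpow_pos_of_pos (by positivity) _).ne

/-- Completing the square for the product of two Gaussians. -/
lemma sq_norm_div_add_sq_norm_div {d : ℕ} {s t : ℝ} (hs : 0 < s) (ht : 0 < t) (u w : Ed d) :
    ‖u‖ ^ 2 / (2 * s) + ‖w - u‖ ^ 2 / (2 * t) =
      ((s + t) / (2 * s * t)) * ‖u - (s / (s + t)) • w‖ ^ 2 + ‖w‖ ^ 2 / (2 * (s + t)) := by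
  have hst : s + t ≠ 0 := by positivity
  rw [norm_sub_sq_real, norm_sub_sq_real, norm_smul, real_inner_smul_right, real_inner_comm w u,
    mul_pow, Real.norm_eq_abs, sq_abs]
  field_simp
  ring

/-- The semigroup property of the heat kernel. -/
lemma lintegral_heatKernel_mul_heatKernel {d : ℕ} {s t : ℝ} (hs : 0 < s) (ht : 0 < t)
    (w : Ed d) :
    ∫⁻ u : Ed d, ENNReal.ofReal (heatKernel s u) * ENNReal.ofReal (heatKernel t (w - u)) =
      ENNReal.ofReal (heatKernel (s + t) w) := by
  have key : ∀ u : Ed d, ENNReal.ofReal (heatKernel s u) * ENNReal.ofReal (heatKernel t (w - u)) =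
      ENNReal.ofReal ((2 * π * s) ^ (-(d : ℝ) / 2) * (2 * π * t) ^ (-(d : ℝ) / 2) *
        Real.exp (-‖w‖ ^ 2 / (2 * (s + t)))) *
      ENNReal.ofReal (Real.exp (-((s + t) / (2 * s * t)) * ‖u - (s / (s + t)) • w‖ ^ 2)) := by
    intro u
    rw [← ENNReal.ofReal_mul (heatKernel_nonneg hs.le _), ← ENNReal.ofReal_mul (by positivity)]
    congr 1
    unfold heatKernel
    have h := sq_norm_div_add_sq_norm_div hs ht u w
    have e : Real.exp (-‖u‖ ^ 2 / (2 * s)) * Real.exp (-‖w - u‖ ^ 2 / (2 * t)) =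
        Real.exp (-‖w‖ ^ 2 / (2 * (s + t))) *
          Real.exp (-((s + t) / (2 * s * t)) * ‖u - (s / (s + t)) • w‖ ^ 2) := by
      rw [← Real.exp_add, ← Real.exp_add]
      congr 1
      linear_combination -h
    linear_combination ((2 * π * s) ^ (-(d : ℝ) / 2) * (2 * π * t) ^ (-(d : ℝ) / 2)) * e
  simp_rw [key]
  rw [lintegral_const_mul _ (by fun_prop),
    lintegral_sub_right_eq_self
      (fun u : Ed d => ENNReal.ofReal (Real.exp (-((s + t) / (2 * s * t)) * ‖u‖ ^ 2))),
    lintegral_exp_neg_mul_sq_norm (by positivity), ← ENNReal.ofReal_mul (by positivity)]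
  congr 1
  unfold heatKernel
  have e : (2 * π * s) ^ (-(d : ℝ) / 2) * (2 * π * t) ^ (-(d : ℝ) / 2) *
      (π / ((s + t) / (2 * s * t))) ^ ((d : ℝ) / 2) = (2 * π * (s + t)) ^ (-(d : ℝ) / 2) := by
    rw [← Real.mul_rpow (by positivity) (by positivity), neg_div, Real.rpow_neg (by positivity),
      Real.rpow_neg (by positivity), ← Real.inv_rpow (by positivity),
      ← Real.inv_rpow (by positivity), ← Real.mul_rpow (by positivity) (by positivity)]
    congr 1
    field_simp
  linear_combination Real.exp (-‖w‖ ^ 2 / (2 * (s + t))) * e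

lemma pinPts_cons_succ {d : ℕ} (x y u : Ed d) {N : ℕ} (vs : Fin N → Ed d) (j : ℕ) :
    pinPts x y (Fin.cons u vs : Fin (N + 1) → Ed d) (j + 1) = pinPts u y vs j := by
  rcases j with _ | j
  · simp [pinPts]
  · by_cases h : j + 1 ≤ N
    · have h' : j + 1 + 1 ≤ N + 1 := by omega
      simp only [pinPts, h, h', dite_true, Nat.add_eq_zero_iff, one_ne_zero, and_false, dite_false]
      exact Fin.cons_succ (α := fun _ => Ed d) u vs ⟨j, by omega⟩
    · have h' : ¬ j + 1 + 1 ≤ N + 1 := by omega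
      simp [pinPts, h, h']

lemma continuous_pinPts {d : ℕ} (x y : Ed d) (N j : ℕ) :
    Continuous fun vs : Fin N → Ed d => pinPts x y vs j := by
  unfold pinPts
  split_ifs <;> fun_prop

/-- The iterated convolution of shifted heat kernels along a pinned chain. -/
lemma lintegral_prod_heatKernel {d : ℕ} {s : ℝ} (hs : 0 < s) (N : ℕ) (x y : Ed d)
    (h : ℕ → Ed d) :
    ∫⁻ vs : Fin N → Ed d, ∏ i : Fin (N + 1), ENNReal.ofReal
        (heatKernel s (pinPts x y vs ((i : ℕ) + 1) - pinPts x y vs (i : ℕ) - h i)) =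
      ENNReal.ofReal (heatKernel (s * (N + 1)) (y - x - ∑ i ∈ Finset.range (N + 1), h i)) := by
  induction N generalizing x h with
  | zero =>
    rw [lintegral_unique]
    simp [pinPts, volume_pi]
  | succ N ih =>
    have hk : Measurable (heatKernel s : Ed d → ℝ) := (continuous_heatKernel s).measurable
    have hp : ∀ (z : Ed d) (M j : ℕ), Measurable fun vs : Fin M → Ed d => pinPts z y vs j :=
      fun z M j => (continuous_pinPts z y M j).measurable
    have hpres := (volume_preserving_piFinSuccAbove (fun _ : Fin (N + 1) => Ed d) 0).symm
    rw [← hpres.lintegral_comp_emb (MeasurableEquiv.measurableEmbedding _)]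
    rw [Measure.volume_eq_prod, lintegral_prod _ (by
      refine (Finset.measurable_prod _ fun i _ => ?_).aemeasurable
      have hs := (MeasurableEquiv.piFinSuccAbove (fun _ : Fin (N + 1) => Ed d) 0).symm.measurable
      exact (hk.comp ((((hp _ _ _).comp hs).sub ((hp _ _ _).comp hs)).sub_const _)).ennreal_ofReal)]
    have hcons : ∀ (u : Ed d) (vs : Fin N → Ed d),
        (MeasurableEquiv.piFinSuccAbove (fun _ : Fin (N + 1) => Ed d) 0).symm (u, vs) =
          (Fin.cons u vs : Fin (N + 1) → Ed d) := by
      intro u vs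
      simp [MeasurableEquiv.piFinSuccAbove, Fin.insertNthEquiv]
    have step : ∀ u : Ed d, ∫⁻ vs : Fin N → Ed d, ∏ i : Fin (N + 1 + 1), ENNReal.ofReal
        (heatKernel s (pinPts x y ((MeasurableEquiv.piFinSuccAbove
            (fun _ : Fin (N + 1) => Ed d) 0).symm (u, vs)) ((i : ℕ) + 1) -
          pinPts x y ((MeasurableEquiv.piFinSuccAbove
            (fun _ : Fin (N + 1) => Ed d) 0).symm (u, vs)) (i : ℕ) - h i)) =
        ENNReal.ofReal (heatKernel s (u - (x + h 0))) * ENNReal.ofReal (heatKernel (s * (N + 1))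
          (y - x - ∑ i ∈ Finset.range (N + 1 + 1), h i - (u - (x + h 0)))) := by
      intro u
      simp_rw [hcons, Fin.prod_univ_succ (n := N + 1), Fin.val_succ, pinPts_cons_succ,
        Fin.val_zero, pinPts_zero]
      rw [lintegral_const_mul _ (by
        refine Finset.measurable_prod _ fun i _ => ?_
        exact (hk.comp (((hp _ _ _).sub (hp _ _ _)).sub_const _)).ennreal_ofReal),
        ih u (fun j => h (j + 1))]
      rw [Finset.sum_range_succ' _ (N + 1), sub_sub u x]
      congr 3
      abel
    simp_rw [step]
    rw [lintegral_sub_right_eq_self (fun u : Ed d => ENNReal.ofReal (heatKernel s u) *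
      ENNReal.ofReal (heatKernel (s * (N + 1))
        (y - x - ∑ i ∈ Finset.range (N + 1 + 1), h i - u))) (x + h 0),
      lintegral_heatKernel_mul_heatKernel hs (by positivity)]
    push_cast
    congr 2
    ring

/-- The measure of the intermediate points of the pinned chain underlying `WxyaN`. -/
def chainMeasure {d : ℕ} (x y : Ed d) (a : ℝ) (N : ℕ) : Measure (Fin N → Ed d) :=
  volume.withDensity fun vs => ENNReal.ofReal (∏ i : Fin (N + 1),
    heatKernel (a ^ 2) (pinPts x y vs ((i : ℕ) + 1) - pinPts x y vs (i : ℕ)))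

/-- The piecewise linear path through the points of the pinned chain. -/
def chainPath {d : ℕ} (x y : Ed d) (N : ℕ) (vs : Fin N → Ed d) : PathSp d :=
  pwLinE x (N + 1) fun i => pinPts x y vs ((i : ℕ) + 1) - pinPts x y vs (i : ℕ)

lemma heatKernel_mul_exp_inner {d : ℕ} {s : ℝ} (hs : 0 < s) (c : ℝ) (ξ v : Ed d) :
    heatKernel s v * Real.exp ⟪ξ, c • v⟫ =
      Real.exp (s * ‖ξ‖ ^ 2 / 2 * c ^ 2) * heatKernel s (v - (s * c) • ξ) := by
  unfold heatKernel
  have e : Real.exp (-‖v‖ ^ 2 / (2 * s)) * Real.exp ⟪ξ, c • v⟫ =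
      Real.exp (s * ‖ξ‖ ^ 2 / 2 * c ^ 2) *
        Real.exp (-‖v - (s * c) • ξ‖ ^ 2 / (2 * s)) := by
    rw [← Real.exp_add, ← Real.exp_add, norm_sub_sq_real, norm_smul, real_inner_smul_right,
      real_inner_smul_right, real_inner_comm v ξ, mul_pow, Real.norm_eq_abs, sq_abs]
    congr 1
    field_simp
    ring
  linear_combination (2 * π * s) ^ (-(d : ℝ) / 2) * e

/-- Exponential moments of linear functionals of the increments of the pinned chain. -/
lemma lintegral_exp_inner_chainMeasure {d : ℕ} (x y : Ed d) {a : ℝ} (ha : 0 < a) (N : ℕ)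
    (c : ℕ → ℝ) (ξ : Ed d) :
    ∫⁻ vs, ENNReal.ofReal (Real.exp ⟪ξ, ∑ i : Fin (N + 1),
        c i • (pinPts x y vs ((i : ℕ) + 1) - pinPts x y vs (i : ℕ))⟫) ∂chainMeasure x y a N =
      ENNReal.ofReal (Real.exp (a ^ 2 * ‖ξ‖ ^ 2 / 2 * ∑ i : Fin (N + 1), c i ^ 2)) *
      ENNReal.ofReal (heatKernel (a ^ 2 * (N + 1))
        (y - x - ∑ i ∈ Finset.range (N + 1), (a ^ 2 * c i) • ξ)) := by
  have ha2 : 0 < a ^ 2 := by positivity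
  have hp : ∀ j : ℕ, Continuous fun vs : Fin N → Ed d => pinPts x y vs j :=
    continuous_pinPts x y N
  have hk : Continuous (heatKernel (a ^ 2) : Ed d → ℝ) := continuous_heatKernel _
  have hdens : Measurable fun vs : Fin N → Ed d => ENNReal.ofReal (∏ i : Fin (N + 1),
      heatKernel (a ^ 2) (pinPts x y vs ((i : ℕ) + 1) - pinPts x y vs (i : ℕ))) := by
    fun_prop
  unfold chainMeasure
  rw [lintegral_withDensity_eq_lintegral_mul _ hdens (by fun_prop)]
  rw [← lintegral_prod_heatKernel ha2 N x y (fun i => (a ^ 2 * c i) • ξ),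
    ← lintegral_const_mul _ (by fun_prop)]
  refine lintegral_congr fun vs => ?_
  rw [Pi.mul_apply, ← ENNReal.ofReal_mul (Finset.prod_nonneg fun i _ =>
      heatKernel_nonneg ha2.le _),
    ← ENNReal.ofReal_prod_of_nonneg (fun i _ => heatKernel_nonneg ha2.le _),
    ← ENNReal.ofReal_mul (Real.exp_pos _).le, inner_sum, Real.exp_sum, ← Finset.prod_mul_distrib,
    Finset.mul_sum, Real.exp_sum, ← Finset.prod_mul_distrib]
  congr 1
  exact Finset.prod_congr rfl fun i _ => heatKernel_mul_exp_inner ha2 _ _ _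

lemma chainMeasure_univ {d : ℕ} (x y : Ed d) {a : ℝ} (ha : 0 < a) (N : ℕ) :
    chainMeasure x y a N univ = ENNReal.ofReal (heatKernel (a ^ 2 * (N + 1)) (y - x)) := by
  simpa using lintegral_exp_inner_chainMeasure x y ha N 0 0

lemma clamp01_mono : Monotone clamp01 := fun _ _ h => by
  unfold clamp01; gcongr

lemma clamp01_mem_Icc (r : ℝ) : clamp01 r ∈ Icc (0 : ℝ) 1 :=
  ⟨le_min zero_le_one (le_max_left _ _), min_le_left _ _⟩

lemma sum_clamp01 (N : ℕ) {r : ℝ} (h0 : 0 ≤ r) :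
    ∑ i : Fin N, clamp01 (r - ((i : ℕ) : ℝ)) = min (N : ℝ) r := by
  rw [Fin.sum_univ_eq_sum_range (fun i => clamp01 (r - (i : ℝ)))]
  induction N with
  | zero => simp [h0]
  | succ N ih =>
    rw [Finset.sum_range_succ, ih, clamp01]
    push_cast
    rcases le_total r N with h | h
    · rw [min_eq_right h, max_eq_left (by linarith), min_eq_right (by linarith),
        min_eq_right (by linarith), add_zero]
    · rw [min_eq_left h, max_eq_right (by linarith)]
      rcases le_total r (N + 1) with h' | h'
      · rw [min_eq_right (by linarith), min_eq_right h']; ring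
      · rw [min_eq_left (by linarith), min_eq_left h']

lemma pwLinE_apply {d : ℕ} (x : Ed d) (N : ℕ) (v : Fin N → Ed d) (t : unitInterval) :
    pwLinE x N v t = x + ∑ i : Fin N, clamp01 ((N : ℝ) * (t : ℝ) - ((i : ℕ) : ℝ)) • v i :=
  rfl

lemma pwLinE_sub_pwLinE {d : ℕ} (x : Ed d) (N : ℕ) (v : Fin N → Ed d) (s t : unitInterval) :
    pwLinE x N v t - pwLinE x N v s = ∑ i : Fin N, (clamp01 ((N : ℝ) * (t : ℝ) - ((i : ℕ) : ℝ)) -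
      clamp01 ((N : ℝ) * (s : ℝ) - ((i : ℕ) : ℝ))) • v i := by
  simp_rw [pwLinE_apply, sub_smul, Finset.sum_sub_distrib]
  abel

lemma sum_sq_clamp01_sub_le (N : ℕ) {s t : unitInterval} (hst : s ≤ t) :
    ∑ i : Fin N, (clamp01 ((N : ℝ) * (t : ℝ) - ((i : ℕ) : ℝ)) -
      clamp01 ((N : ℝ) * (s : ℝ) - ((i : ℕ) : ℝ))) ^ 2 ≤ N * ((t : ℝ) - s) := by
  have hsum : ∀ r : unitInterval,
      ∑ i : Fin N, clamp01 ((N : ℝ) * (r : ℝ) - ((i : ℕ) : ℝ)) = N * r := fun r => by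
    rw [sum_clamp01 N (mul_nonneg (Nat.cast_nonneg _) r.2.1)]
    exact min_eq_right (mul_le_of_le_one_right (Nat.cast_nonneg _) r.2.2)
  calc _ ≤ ∑ i : Fin N, (clamp01 ((N : ℝ) * (t : ℝ) - ((i : ℕ) : ℝ)) -
      clamp01 ((N : ℝ) * (s : ℝ) - ((i : ℕ) : ℝ))) := by
        refine Finset.sum_le_sum fun i _ => ?_
        have hmono : clamp01 ((N : ℝ) * (s : ℝ) - ((i : ℕ) : ℝ)) ≤
            clamp01 ((N : ℝ) * (t : ℝ) - ((i : ℕ) : ℝ)) := by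
          refine clamp01_mono ?_
          have : (s : ℝ) ≤ t := hst
          gcongr
        have h1 := (clamp01_mem_Icc ((N : ℝ) * (s : ℝ) - ((i : ℕ) : ℝ))).1
        have h2 := (clamp01_mem_Icc ((N : ℝ) * (t : ℝ) - ((i : ℕ) : ℝ))).2
        nlinarith
    _ = N * ((t : ℝ) - s) := by rw [Finset.sum_sub_distrib, hsum, hsum]; ring

lemma continuous_chainPath {d : ℕ} (x y : Ed d) (N : ℕ) : Continuous (chainPath x y N) := by
  refine ContinuousMap.continuous_of_continuous_uncurry _ ?_
  have hp : ∀ j : ℕ, Continuous fun q : (Fin N → Ed d) × unitInterval => pinPts x y q.1 j :=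
    fun j => (continuous_pinPts x y N j).comp continuous_fst
  refine continuous_const.add (continuous_finsetSum _ fun i _ => ?_)
  exact (clamp01_continuous.comp (by fun_prop)).smul ((hp _).sub (hp _))

/-- The increments of the pinned path have sub-Gaussian exponential moments. -/
lemma lintegral_exp_inner_chainPath_le {d : ℕ} (x y : Ed d) {a : ℝ} (ha : 0 < a) (N : ℕ)
    {s t : unitInterval} (hst : s ≤ t) (ξ : Ed d) :
    ∫⁻ vs, ENNReal.ofReal (Real.exp ⟪ξ, chainPath x y N vs t - chainPath x y N vs s⟫)
        ∂chainMeasure x y a N ≤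
      ENNReal.ofReal (Real.exp (a ^ 2 * (N + 1) * ‖ξ‖ ^ 2 * ((t : ℝ) - s) / 2) *
        (2 * π * (a ^ 2 * (N + 1))) ^ (-(d : ℝ) / 2)) := by
  simp_rw [chainPath, pwLinE_sub_pwLinE]
  rw [lintegral_exp_inner_chainMeasure x y ha N (fun i =>
      clamp01 (((N + 1 : ℕ) : ℝ) * (t : ℝ) - (i : ℝ)) -
      clamp01 (((N + 1 : ℕ) : ℝ) * (s : ℝ) - (i : ℝ))) ξ,
    ← ENNReal.ofReal_mul (Real.exp_pos _).le]
  refine ENNReal.ofReal_le_ofReal ?_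
  refine mul_le_mul (Real.exp_le_exp.2 ?_) (heatKernel_le (by positivity) _)
    (heatKernel_nonneg (by positivity) _) (Real.exp_pos _).le
  refine (mul_le_mul_of_nonneg_left (sum_sq_clamp01_sub_le (N + 1) hst)
    (by positivity : 0 ≤ a ^ 2 * ‖ξ‖ ^ 2 / 2)).trans (le_of_eq ?_)
  push_cast
  ring

lemma norm_stepVec {d : ℕ} (r : ℝ) (p : Fin d × Bool) : ‖stepVec r p‖ = |r| := by
  unfold stepVec
  rw [norm_smul, PiLp.norm_single]
  split_ifs <;> simp

/-- A vector of norm exceeding `l` has a signed coordinate exceeding `l / d`. -/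
lemma exists_le_inner_stepVec {d : ℕ} {r l : ℝ} (hr : 0 ≤ r) {v : Ed d} (hv : l < ‖v‖)
    (hl : 0 ≤ l) : ∃ p : Fin d × Bool, r * l / d ≤ ⟪stepVec r p, v⟫ := by
  have hsum : ‖v‖ ≤ ∑ j, |v j| := by
    rw [EuclideanSpace.norm_eq]
    refine Real.sqrt_le_iff.2 ⟨Finset.sum_nonneg fun _ _ => abs_nonneg _, ?_⟩
    exact Finset.sum_sq_le_sq_sum_of_nonneg fun _ _ => abs_nonneg _
  have hd : 0 < d := by
    rcases Nat.eq_zero_or_pos d with rfl | h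
    · simp at hsum; linarith [norm_nonneg v, norm_eq_zero.2 hsum]
    · exact h
  obtain ⟨j, -, hj⟩ : ∃ j ∈ Finset.univ, l / d ≤ |v j| := by
    refine Finset.exists_le_of_sum_le ⟨⟨0, hd⟩, Finset.mem_univ _⟩ ?_
    rw [Finset.sum_const, Finset.card_univ, Fintype.card_fin, nsmul_eq_mul,
      mul_div_cancel₀ _ (by positivity)]
    exact hv.le.trans hsum
  have hj' := mul_le_mul_of_nonneg_left hj hr
  rw [← mul_div_assoc] at hj'
  rcases abs_cases (v j) with ⟨h, -⟩ | ⟨h, -⟩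
  · refine ⟨(j, true), ?_⟩
    rw [h] at hj'
    simpa [stepVec, real_inner_smul_left, EuclideanSpace.inner_single_left] using hj'
  · refine ⟨(j, false), ?_⟩
    rw [h] at hj'
    simpa [stepVec, real_inner_smul_left, EuclideanSpace.inner_single_left] using hj'

/-- Chernoff bound for the increments of the pinned path. -/
lemma chainMeasure_norm_sub_gt_le {d : ℕ} (x y : Ed d) {a : ℝ} (ha : 0 < a) (N : ℕ)
    {s t : unitInterval} (hst : s ≤ t) {r l : ℝ} (hr : 0 ≤ r) (hl : 0 ≤ l) :
    chainMeasure x y a N {vs | l < ‖chainPath x y N vs t - chainPath x y N vs s‖} ≤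
      ENNReal.ofReal (2 * d * (2 * π * (a ^ 2 * (N + 1))) ^ (-(d : ℝ) / 2) *
        Real.exp (a ^ 2 * (N + 1) * r ^ 2 * ((t : ℝ) - s) / 2) * Real.exp (-(r * l / d))) := by
  set B := (2 * π * (a ^ 2 * (N + 1))) ^ (-(d : ℝ) / 2) *
    Real.exp (a ^ 2 * (N + 1) * r ^ 2 * ((t : ℝ) - s) / 2) * Real.exp (-(r * l / d)) with hB
  have hsub : {vs | l < ‖chainPath x y N vs t - chainPath x y N vs s‖} ⊆
      ⋃ p : Fin d × Bool, {vs | ENNReal.ofReal (Real.exp (r * l / d)) ≤ ENNReal.ofReal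
        (Real.exp ⟪stepVec r p, chainPath x y N vs t - chainPath x y N vs s⟫)} := by
    intro vs hvs
    obtain ⟨p, hp⟩ := exists_le_inner_stepVec hr hvs hl
    exact mem_iUnion.2 ⟨p, ENNReal.ofReal_le_ofReal (Real.exp_le_exp.2 hp)⟩
  have hc : ∀ q : unitInterval, Continuous fun vs => chainPath x y N vs q := fun q =>
    (continuous_eval_const q).comp (continuous_chainPath x y N)
  have hone : ∀ p : Fin d × Bool, chainMeasure x y a N
      {vs | ENNReal.ofReal (Real.exp (r * l / d)) ≤ ENNReal.ofReal
        (Real.exp ⟪stepVec r p, chainPath x y N vs t - chainPath x y N vs s⟫)} ≤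
      ENNReal.ofReal B := by
    intro p
    refine (meas_ge_le_lintegral_div (by fun_prop) (by simp [Real.exp_pos])
      ENNReal.ofReal_ne_top).trans ?_
    refine (ENNReal.div_le_div_right
      (lintegral_exp_inner_chainPath_le x y ha N hst (stepVec r p)) _).trans ?_
    rw [norm_stepVec, sq_abs, ← ENNReal.ofReal_div_of_pos (Real.exp_pos _), hB, Real.exp_neg]
    refine ENNReal.ofReal_le_ofReal (le_of_eq ?_)
    rw [div_eq_mul_inv]
    ring
  refine (measure_mono hsub).trans ((measure_iUnion_le _).trans ?_)
  rw [tsum_fintype]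
  refine (Finset.sum_le_sum fun p _ => hone p).trans (le_of_eq ?_)
  rw [Finset.sum_const, Finset.card_univ, Fintype.card_prod, Fintype.card_fin, Fintype.card_bool,
    nsmul_eq_mul, ← ENNReal.ofReal_natCast, ← ENNReal.ofReal_mul (Nat.cast_nonneg _), hB]
  congr 1
  push_cast
  ring

/-- Dyadic chaining: a continuous function whose increments over dyadic intervals of length
`2⁻ⁿ` are at most `C (9/10)ⁿ` is Hölder continuous on `[0,1]`. -/
lemma norm_sub_le_of_dyadic {E : Type*} [NormedAddCommGroup E] {F : ℝ → E} (hF : Continuous F)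
    {C : ℝ} (hC : 0 ≤ C)
    (hdy : ∀ n k : ℕ, k < 2 ^ n → ‖F ((k + 1) / 2 ^ n) - F (k / 2 ^ n)‖ ≤ C * (9 / 10) ^ n)
    (n : ℕ) {s t : ℝ} (hs : 0 ≤ s) (hst : s ≤ t) (ht : t ≤ 1) (hn : t - s ≤ (1 / 2) ^ n) :
    ‖F s - F t‖ ≤ 19 * C * (9 / 10) ^ n := by
  have hfloor : ∀ u : ℝ, 0 ≤ u → u ≤ 1 → ∀ k : ℕ, ⌊2 ^ k * u⌋₊ ≤ 2 ^ k := by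
    intro u hu hu1 k
    refine Nat.floor_le_of_le ?_
    push_cast
    exact mul_le_of_le_one_right (by positivity) hu1
  have happrox : ∀ u : ℝ, 0 ≤ u → u ≤ 1 → ∀ k : ℕ,
      dist (F (⌊2 ^ k * u⌋₊ / 2 ^ k)) (F u) ≤ 9 * C * (9 / 10) ^ k := by
    intro u hu hu1 k
    have hstep : ∀ j : ℕ, dist (F (⌊2 ^ j * u⌋₊ / 2 ^ j)) (F (⌊2 ^ (j + 1) * u⌋₊ / 2 ^ (j + 1))) ≤
        C * (9 / 10) * (9 / 10) ^ j := by
      intro j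
      have h2 : (2 : ℝ) ^ (j + 1) = 2 * 2 ^ j := by ring
      have hp : (0 : ℝ) < 2 ^ j := by positivity
      have hlo := Nat.floor_le (show 0 ≤ 2 ^ j * u by positivity)
      have hhi := Nat.lt_floor_add_one (2 ^ j * u)
      have hlo' := Nat.floor_le (show 0 ≤ 2 ^ (j + 1) * u by positivity)
      have hhi' := Nat.lt_floor_add_one (2 ^ (j + 1) * u)
      have hle := hfloor u hu hu1 (j + 1)
      set p := ⌊2 ^ j * u⌋₊ with hpdef
      set q := ⌊2 ^ (j + 1) * u⌋₊ with hqdef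
      have hq1 : 2 * p < q + 1 := by
        have : (2 * p : ℝ) < q + 1 := by nlinarith
        exact_mod_cast this
      have hq2 : q < 2 * p + 2 := by
        have : (q : ℝ) < 2 * p + 2 := by nlinarith
        exact_mod_cast this
      have hpe : (p : ℝ) / 2 ^ j = ((2 * p : ℕ) : ℝ) / 2 ^ (j + 1) := by
        rw [h2]; push_cast; field_simp
      rw [hpe]
      obtain h | h : q = 2 * p ∨ q = 2 * p + 1 := by omega
      · rw [h, dist_self]; positivity
      · have := hdy (j + 1) (2 * p) (by omega)
        rw [h, dist_comm, dist_eq_norm]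
        push_cast at this ⊢
        calc _ ≤ _ := this
          _ = _ := by ring
    have hlim : Tendsto (fun j : ℕ => F (⌊2 ^ j * u⌋₊ / 2 ^ j)) atTop (𝓝 (F u)) := by
      refine (hF.tendsto u).comp ?_
      have h := (tendsto_nat_floor_mul_div_atTop hu).comp
        (tendsto_pow_atTop_atTop_of_one_lt (one_lt_two (α := ℝ)))
      refine h.congr fun j => ?_
      simp [mul_comm]
    refine (dist_le_of_le_geometric_of_tendsto _ _ (by norm_num) hstep hlim k).trans
      (le_of_eq ?_)
    ring
  have ht0 := hs.trans hst
  have hs1 := hst.trans ht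
  have hmid : dist (F (⌊2 ^ n * s⌋₊ / 2 ^ n)) (F (⌊2 ^ n * t⌋₊ / 2 ^ n)) ≤ C * (9 / 10) ^ n := by
    have hp : (0 : ℝ) < 2 ^ n := by positivity
    have hlo := Nat.floor_le (show 0 ≤ 2 ^ n * s by positivity)
    have hhi := Nat.lt_floor_add_one (2 ^ n * s)
    have hlo' := Nat.floor_le (show 0 ≤ 2 ^ n * t by positivity)
    have hhi' := Nat.lt_floor_add_one (2 ^ n * t)
    have hle := hfloor t ht0 ht n
    have hmono : ⌊2 ^ n * s⌋₊ ≤ ⌊2 ^ n * t⌋₊ := Nat.floor_mono (by gcongr)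
    have hdiff : 2 ^ n * t - 2 ^ n * s ≤ 1 := by
      have := mul_le_mul_of_nonneg_left hn hp.le
      rw [← mul_pow] at this
      norm_num at this
      linarith
    set p := ⌊2 ^ n * s⌋₊
    set q := ⌊2 ^ n * t⌋₊
    have hq2 : q < p + 2 := by
      have : (q : ℝ) < p + 2 := by linarith
      exact_mod_cast this
    obtain h | h : q = p ∨ q = p + 1 := by omega
    · rw [h, dist_self]; positivity
    · have := hdy n p (by omega)
      rw [h, dist_comm, dist_eq_norm]
      push_cast
      exact this
  rw [← dist_eq_norm]
  have h1 := happrox s hs hs1 n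
  have h2 := happrox t ht0 ht n
  rw [dist_comm] at h1
  linarith [dist_triangle4 (F s) (F (⌊2 ^ n * s⌋₊ / 2 ^ n)) (F (⌊2 ^ n * t⌋₊ / 2 ^ n)) (F t)]

/-- The paths from `x` with a prescribed geometric modulus of continuity. -/
def modulusPaths {d : ℕ} (x : Ed d) (C : ℝ) : Set (PathSp d) :=
  {ω | ω 0 = x ∧ ∀ (n : ℕ) (s t : unitInterval), dist s t ≤ (1 / 2) ^ n →
    dist (ω s) (ω t) ≤ C * (9 / 10) ^ n}

lemma isCompact_modulusPaths {d : ℕ} (x : Ed d) (C : ℝ) : IsCompact (modulusPaths x C) := by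
  have hequi : ∀ ε > 0, ∃ δ > 0, ∀ f : unitInterval → Ed d,
      (∀ (n : ℕ) (s t : unitInterval), dist s t ≤ (1 / 2) ^ n →
        dist (f s) (f t) ≤ C * (9 / 10) ^ n) →
      ∀ s t : unitInterval, dist s t < δ → dist (f s) (f t) < ε := by
    intro ε hε
    have hlim : Tendsto (fun n : ℕ => C * (9 / 10 : ℝ) ^ n) atTop (𝓝 0) := by
      simpa using (tendsto_pow_atTop_nhds_zero_of_lt_one (by norm_num)
        (by norm_num : (9 / 10 : ℝ) < 1)).const_mul C
    obtain ⟨n, hn⟩ := (hlim.eventually (gt_mem_nhds hε)).exists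
    exact ⟨(1 / 2) ^ n, by positivity, fun f hf s t hst => (hf n s t hst.le).trans_lt hn⟩
  have himage : (fun ω : PathSp d => (ω : unitInterval → Ed d)) '' modulusPaths x C =
      {f | f 0 = x ∧ ∀ (n : ℕ) (s t : unitInterval), dist s t ≤ (1 / 2) ^ n →
        dist (f s) (f t) ≤ C * (9 / 10) ^ n} := by
    ext f
    constructor
    · rintro ⟨ω, hω, rfl⟩
      exact hω
    · rintro ⟨h0, hf⟩
      have hcont : Continuous f := Metric.continuous_iff.2 fun t ε hε => by
        obtain ⟨δ, hδ, h⟩ := hequi ε hε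
        exact ⟨δ, hδ, fun s hs => h f hf s t hs⟩
      exact ⟨⟨f, hcont⟩, ⟨h0, hf⟩, rfl⟩
  refine ArzelaAscoli.isCompact_of_equicontinuous _ ?_ ?_
  · change IsCompact ((fun ω : PathSp d => (ω : unitInterval → Ed d)) '' modulusPaths x C)
    rw [himage]
    refine (isCompact_univ_pi fun _ : unitInterval => isCompact_closedBall x C).of_isClosed_subset
      ?_ ?_
    · simp only [ofPred_and, ofPred_forall]
      refine (isClosed_eq (continuous_apply _) continuous_const).inter
        (isClosed_iInter fun n => isClosed_iInter fun s => isClosed_iInter fun t =>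
          isClosed_iInter fun _ => ?_)
      exact isClosed_le ((continuous_apply s).dist (continuous_apply t)) continuous_const
    · rintro f ⟨h0, hf⟩ t -
      have hdist : dist t 0 ≤ (1 / 2 : ℝ) ^ 0 := by
        rw [pow_zero, Subtype.dist_eq, Real.dist_eq, abs_le]
        have := t.2.1
        have := t.2.2
        constructor <;> simp <;> linarith
      simpa [h0] using hf 0 t 0 hdist
  · intro t
    refine Metric.equicontinuousAt_iff.2 fun ε hε => ?_
    obtain ⟨δ, hδ, h⟩ := hequi ε hε
    exact ⟨δ, hδ, fun s hs ω => h _ ω.2.2 t s (by rwa [dist_comm])⟩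

/-- A path missing the modulus of continuity has a large increment over a dyadic interval. -/
lemma exists_dyadic_of_notMem_modulusPaths {d : ℕ} {x : Ed d} {C : ℝ} (hC : 0 ≤ C) {ω : PathSp d}
    (h0 : ω 0 = x) (hω : ω ∉ modulusPaths x (19 * C)) :
    ∃ n k : ℕ, k < 2 ^ n ∧ C * (9 / 10) ^ n <
      ‖evalAt ω ((k + 1) / 2 ^ n) - evalAt ω (k / 2 ^ n)‖ := by
  by_contra! hdy
  have hF : Continuous (evalAt ω) := ω.continuous.comp continuous_projIcc
  have hval : ∀ t : unitInterval, evalAt ω t = ω t := fun t => by simp [evalAt, projIcc_val]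
  refine hω ⟨h0, fun n s t hst => ?_⟩
  rw [Subtype.dist_eq, Real.dist_eq] at hst
  rw [dist_eq_norm, ← hval, ← hval]
  rcases le_total (s : ℝ) t with h | h
  · refine norm_sub_le_of_dyadic hF hC hdy n s.2.1 h t.2.2 ?_
    rwa [abs_sub_comm, abs_of_nonneg (by linarith)] at hst
  · rw [norm_sub_rev]
    refine norm_sub_le_of_dyadic hF hC hdy n t.2.1 h s.2.2 ?_
    rwa [abs_of_nonneg (by linarith)] at hst

lemma exp_neg_le_div_pow_four {u : ℝ} (hu : 0 < u) : Real.exp (-u) ≤ 24 / u ^ 4 := by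
  have h := Real.pow_div_factorial_le_exp u hu.le 4
  rw [Real.exp_neg, inv_le_comm₀ (Real.exp_pos _) (by positivity), inv_div]
  simpa [Nat.factorial] using h

/-- The pinned path violates its modulus of continuity with small mass. -/
lemma chainMeasure_notMem_modulusPaths_le {d : ℕ} (hd : 1 ≤ d) (x y : Ed d) {a : ℝ} (ha : 0 < a)
    (N : ℕ) {C : ℝ} (hC : 0 < C) :
    chainMeasure x y a N {vs | chainPath x y N vs ∉ modulusPaths x (19 * C)} ≤
      ENNReal.ofReal (240 * d ^ 5 * (2 * π * (a ^ 2 * (N + 1))) ^ (-(d : ℝ) / 2) *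
        Real.exp (a ^ 2 * (N + 1) / 2) / C ^ 4) := by
  have hd0 : (0 : ℝ) < d := by exact_mod_cast hd
  set T : ℝ := a ^ 2 * (N + 1) with hT
  have hT0 : 0 < T := by positivity
  set A : ℝ := (2 * π * T) ^ (-(d : ℝ) / 2) with hA
  have hA0 : 0 ≤ A := by positivity
  set D : ℝ := 48 * d ^ 5 * A * Real.exp (T / 2) / C ^ 4 with hD
  have hD0 : 0 ≤ D := by positivity
  have hsub : {vs | chainPath x y N vs ∉ modulusPaths x (19 * C)} ⊆
      ⋃ n : ℕ, ⋃ k ∈ Finset.range (2 ^ n), {vs | C * (9 / 10) ^ n <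
        ‖evalAt (chainPath x y N vs) ((k + 1) / 2 ^ n) -
          evalAt (chainPath x y N vs) (k / 2 ^ n)‖} := by
    intro vs hvs
    obtain ⟨n, k, hk, h⟩ := exists_dyadic_of_notMem_modulusPaths hC.le (pwLinE_zero _ _ _) hvs
    exact mem_iUnion.2 ⟨n, mem_biUnion (Finset.mem_range.2 hk) h⟩
  have hterm : ∀ n k : ℕ, k ∈ Finset.range (2 ^ n) → chainMeasure x y a N
      {vs | C * (9 / 10) ^ n < ‖evalAt (chainPath x y N vs) ((k + 1) / 2 ^ n) -
          evalAt (chainPath x y N vs) (k / 2 ^ n)‖} ≤ ENNReal.ofReal (D * (2 / 5) ^ n) := by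
    intro n k hk
    have hk' : (k : ℝ) + 1 ≤ 2 ^ n := by exact_mod_cast Finset.mem_range.1 hk
    have hp : (0 : ℝ) < 2 ^ n := by positivity
    have hmem : (k : ℝ) / 2 ^ n ∈ Icc (0 : ℝ) 1 :=
      ⟨by positivity, (div_le_one hp).2 (by linarith)⟩
    have hmem' : ((k : ℝ) + 1) / 2 ^ n ∈ Icc (0 : ℝ) 1 :=
      ⟨by positivity, (div_le_one hp).2 hk'⟩
    refine (chainMeasure_norm_sub_gt_le x y ha N
      (monotone_projIcc zero_le_one (by gcongr; linarith))
      (by positivity : 0 ≤ (7 / 5 : ℝ) ^ n) (by positivity)).trans ?_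
    refine ENNReal.ofReal_le_ofReal ?_
    rw [projIcc_of_mem _ hmem, projIcc_of_mem _ hmem', ← hT, ← hA]
    have hexp : T * ((7 / 5 : ℝ) ^ n) ^ 2 * ((k + 1) / 2 ^ n - k / 2 ^ n) / 2 ≤ T / 2 := by
      have e : T * ((7 / 5 : ℝ) ^ n) ^ 2 * ((k + 1) / 2 ^ n - k / 2 ^ n) / 2 =
          T / 2 * (49 / 50) ^ n := by
        rw [show (49 / 50 : ℝ) = (7 / 5) ^ 2 / 2 by norm_num, div_pow _ (2 : ℝ), pow_right_comm]
        ring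
      rw [e]
      exact mul_le_of_le_one_right (by positivity) (pow_le_one₀ (by norm_num) (by norm_num))
    have htail : Real.exp (-((7 / 5 : ℝ) ^ n * (C * (9 / 10) ^ n) / d)) ≤
        24 * d ^ 4 / C ^ 4 * (2 / 5) ^ n := by
      refine (exp_neg_le_div_pow_four (by positivity)).trans ?_
      have e : (24 : ℝ) / ((7 / 5 : ℝ) ^ n * (C * (9 / 10) ^ n) / d) ^ 4 =
          24 * d ^ 4 / C ^ 4 * (1 / ((63 / 50) ^ 4)) ^ n := by
        rw [show (63 / 50 : ℝ) = 7 / 5 * (9 / 10) by norm_num, div_pow 1, one_pow, ← pow_mul,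
          mul_comm 4 n, pow_mul, mul_pow]
        field_simp
      rw [e]
      exact mul_le_mul_of_nonneg_left (pow_le_pow_left₀ (by positivity) (by norm_num) n)
        (by positivity)
    calc 2 * (d : ℝ) * A * Real.exp (T * ((7 / 5 : ℝ) ^ n) ^ 2 *
          ((k + 1) / 2 ^ n - k / 2 ^ n) / 2) *
          Real.exp (-((7 / 5 : ℝ) ^ n * (C * (9 / 10) ^ n) / d))
        ≤ 2 * d * A * Real.exp (T / 2) * (24 * d ^ 4 / C ^ 4 * (2 / 5) ^ n) := by gcongr
      _ = D * (2 / 5) ^ n := by rw [hD]; ring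
  have hlevel : ∀ n : ℕ, chainMeasure x y a N (⋃ k ∈ Finset.range (2 ^ n),
      {vs | C * (9 / 10) ^ n < ‖evalAt (chainPath x y N vs) ((k + 1) / 2 ^ n) -
          evalAt (chainPath x y N vs) (k / 2 ^ n)‖}) ≤ ENNReal.ofReal (D * (4 / 5) ^ n) := by
    intro n
    refine (measure_biUnion_finset_le _ _).trans ((Finset.sum_le_sum (hterm n)).trans ?_)
    rw [Finset.sum_const, Finset.card_range, nsmul_eq_mul, ← ENNReal.ofReal_natCast,
      ← ENNReal.ofReal_mul (Nat.cast_nonneg _)]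
    refine ENNReal.ofReal_le_ofReal (le_of_eq ?_)
    rw [show (4 / 5 : ℝ) = 2 * (2 / 5) by norm_num, mul_pow]
    push_cast
    ring
  have hgeom : HasSum (fun n : ℕ => D * (4 / 5 : ℝ) ^ n) (D * 5) := by
    have h := (hasSum_geometric_of_lt_one (by norm_num : (0 : ℝ) ≤ 4 / 5) (by norm_num)).mul_left D
    norm_num at h
    exact h
  refine (measure_mono hsub).trans ((measure_iUnion_le _).trans ((ENNReal.tsum_le_tsum hlevel).trans
    (le_of_eq ?_)))
  rw [← ENNReal.ofReal_tsum_of_nonneg (fun n => by positivity) hgeom.summable, hgeom.tsum_eq, hD]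
  congr 1
  ring

/-- Away from the origin the heat kernel is small for small and for large times. -/
lemma exists_heatKernel_lt {d : ℕ} (hd : 1 ≤ d) {v : Ed d} (hv : v ≠ 0) {ε : ℝ} (hε : 0 < ε) :
    ∃ T₀ T₁ : ℝ, 0 < T₀ ∧ ∀ t, 0 < t → t < T₀ ∨ T₁ < t → heatKernel t v < ε := by
  have hd0 : (0 : ℝ) < d := by exact_mod_cast hd
  have hv0 : 0 < ‖v‖ := norm_pos_iff.2 hv
  have hzero : Tendsto (fun t : ℝ => heatKernel t v) (𝓝[>] 0) (𝓝 0) := by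
    have h := ((tendsto_rpow_mul_exp_neg_mul_atTop_nhds_zero ((d : ℝ) / 2) (‖v‖ ^ 2 / 2)
      (by positivity)).comp tendsto_inv_nhdsGT_zero).const_mul ((2 * π) ^ (-(d : ℝ) / 2))
    rw [mul_zero] at h
    refine h.congr' ?_
    filter_upwards [self_mem_nhdsWithin] with t ht
    have ht : 0 < t := ht
    rw [Function.comp_apply, heatKernel, Real.mul_rpow (by positivity) ht.le, neg_div (2 : ℝ) d,
      Real.inv_rpow ht.le, Real.rpow_neg ht.le, mul_assoc]
    congr 3
    field_simp
  have htop : Tendsto (fun t : ℝ => (2 * π * t) ^ (-(d : ℝ) / 2)) atTop (𝓝 0) := by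
    rw [neg_div]
    exact (tendsto_rpow_neg_atTop (by positivity)).comp
      (tendsto_id.const_mul_atTop (by positivity))
  obtain ⟨T₀, hT₀, h₀⟩ := mem_nhdsGT_iff_exists_Ioo_subset.1 (hzero.eventually (gt_mem_nhds hε))
  obtain ⟨T₁, h₁⟩ := eventually_atTop.1 (htop.eventually (gt_mem_nhds hε))
  refine ⟨T₀, T₁, hT₀, fun t ht => ?_⟩
  rintro (h | h)
  · exact h₀ ⟨ht, h⟩
  · exact (heatKernel_le ht.le v).trans_lt (h₁ t h.le)

/-- The discrete measures `WxyaN` are tight uniformly in the step size and the number of steps. -/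
lemma exists_isCompact_WxyaN_compl_le {d : ℕ} (hd : 1 ≤ d) {x y : Ed d} (hxy : x ≠ y)
    {ε : ℝ} (hε : 0 < ε) :
    ∃ K : Set (ℝ × Omega2 x y), IsCompact K ∧ MeasurableSet K ∧
      ∀ a : ℝ, 0 < a → ∀ N : ℕ, WxyaN x y a N Kᶜ ≤ ENNReal.ofReal ε := by
  obtain ⟨T₀, T₁, hT₀, hsmall⟩ := exists_heatKernel_lt hd (sub_ne_zero.2 hxy.symm) hε
  set B : ℝ := 240 * d ^ 5 * (2 * π * T₀) ^ (-(d : ℝ) / 2) * Real.exp (T₁ / 2) with hB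
  obtain ⟨C, hC, hCε⟩ : ∃ C : ℝ, 0 < C ∧ B / C ^ 4 ≤ ε := by
    have hlim : Tendsto (fun C : ℝ => B / C ^ 4) atTop (𝓝 0) :=
      tendsto_const_nhds.div_atTop (tendsto_pow_atTop (by norm_num))
    obtain ⟨C, h, hC⟩ := ((hlim.eventually (ge_mem_nhds hε)).and (eventually_gt_atTop 0)).exists
    exact ⟨C, hC, h⟩
  have hclosed : IsClosed {ω : PathSp d | ω 0 = x ∧ ω 1 = y} :=
    (isClosed_eq (continuous_eval_const _) continuous_const).inter
      (isClosed_eq (continuous_eval_const _) continuous_const)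
  have hcomp : IsCompact ((Subtype.val : Omega2 x y → PathSp d) ⁻¹' modulusPaths x (19 * C)) :=
    hclosed.isClosedEmbedding_subtypeVal.isCompact_preimage (isCompact_modulusPaths x _)
  have hmeas : MeasurableSet (Icc 0 T₁ ×ˢ
      ((Subtype.val : Omega2 x y → PathSp d) ⁻¹' modulusPaths x (19 * C))) :=
    measurableSet_Icc.prod
      (measurable_subtype_coe (isCompact_modulusPaths x _).isClosed.measurableSet)
  refine ⟨_, isCompact_Icc.prod hcomp, hmeas, fun a ha N => ?_⟩
  have hT : 0 < a ^ 2 * ((N : ℝ) + 1) := by positivity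
  have hF : Measurable fun vs : Fin N → Ed d => ((a ^ 2 * (N + 1) : ℝ),
      pwLin2 x y (N + 1) (fun i => pinPts x y vs ((i : ℕ) + 1) - pinPts x y vs (i : ℕ))
        (pin_telescope x y vs)) :=
    measurable_const.prodMk (continuous_chainPath x y N).measurable.subtype_mk
  have hmap : WxyaN x y a N = (chainMeasure x y a N).map fun vs => ((a ^ 2 * (N + 1) : ℝ),
      pwLin2 x y (N + 1) (fun i => pinPts x y vs ((i : ℕ) + 1) - pinPts x y vs (i : ℕ))
        (pin_telescope x y vs)) := rfl
  rw [hmap, Measure.map_apply hF hmeas.compl]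
  by_cases hcase : a ^ 2 * ((N : ℝ) + 1) < T₀ ∨ T₁ < a ^ 2 * ((N : ℝ) + 1)
  · refine (measure_mono (subset_univ _)).trans ?_
    rw [chainMeasure_univ x y ha]
    exact ENNReal.ofReal_le_ofReal (hsmall _ hT hcase).le
  · rw [not_or, not_lt, not_lt] at hcase
    have hsub : (fun vs : Fin N → Ed d => ((a ^ 2 * (N + 1) : ℝ),
        pwLin2 x y (N + 1) (fun i => pinPts x y vs ((i : ℕ) + 1) - pinPts x y vs (i : ℕ))
          (pin_telescope x y vs))) ⁻¹' (Icc 0 T₁ ×ˢ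
        ((Subtype.val : Omega2 x y → PathSp d) ⁻¹' modulusPaths x (19 * C)))ᶜ ⊆
        {vs | chainPath x y N vs ∉ modulusPaths x (19 * C)} :=
      fun vs hvs hmem => hvs ⟨⟨hT.le, hcase.2⟩, hmem⟩
    refine (measure_mono hsub).trans
      ((chainMeasure_notMem_modulusPaths_le hd x y ha N hC).trans (ENNReal.ofReal_le_ofReal ?_))
    refine le_trans ?_ hCε
    rw [hB]
    have hrpow : (2 * π * (a ^ 2 * ((N : ℝ) + 1))) ^ (-(d : ℝ) / 2) ≤
        (2 * π * T₀) ^ (-(d : ℝ) / 2) := by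
      refine Real.rpow_le_rpow_of_nonpos (by positivity) ?_ ?_
      · exact mul_le_mul_of_nonneg_left hcase.1 (by positivity)
      · rw [neg_div]
        exact neg_nonpos.2 (by positivity)
    gcongr
    exact hcase.2

lemma ofReal_mul_tsum_exp_le_one {b : ℝ} (hb : 0 < b) :
    ENNReal.ofReal (1 - Real.exp (-b)) *
      ∑' N : ℕ, ENNReal.ofReal (Real.exp (-b * (N + 1))) ≤ 1 := by
  have hq : Real.exp (-b) < 1 := by simpa using hb
  have hpow : ∀ N : ℕ, Real.exp (-b * (N + 1)) = Real.exp (-b) * Real.exp (-b) ^ N := fun N => by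
    rw [← pow_succ', ← Real.exp_nat_mul]
    congr 1
    push_cast
    ring
  have hsum := (hasSum_geometric_of_lt_one (Real.exp_pos (-b)).le hq).mul_left (Real.exp (-b))
  simp_rw [hpow]
  rw [← ENNReal.ofReal_tsum_of_nonneg (fun N => by positivity) hsum.summable, hsum.tsum_eq,
    ← ENNReal.ofReal_mul (by linarith), ENNReal.ofReal_le_one, mul_left_comm,
    mul_inv_cancel₀ (by linarith), mul_one]
  exact hq.le

/-- **Lemma 4.3**: the family `{W_{x,y,a} : 0 < a < 1}` of finite measures on
`Γ̃(x,y) = [0,∞) × Ω(x,y)` is tight, for `x ≠ y`. -/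
theorem Wxya_tight (d : ℕ) (hd : 1 ≤ d) (m : ℝ) (hm : 0 < m)
    (x y : Ed d) (hxy : x ≠ y) :
    ∀ η : ℝ, 0 < η → ∃ K : Set (ℝ × Omega2 x y), IsCompact K ∧
      ∀ a : ℝ, 0 < a → a < 1 → Wxya x y m a Kᶜ < ENNReal.ofReal η := by
  intro η hη
  obtain ⟨K, hK, hKm, hKle⟩ := exists_isCompact_WxyaN_compl_le hd hxy (half_pos hη)
  refine ⟨K, hK, fun a ha _ => ?_⟩
  have hlt : ENNReal.ofReal (η / 2) < ENNReal.ofReal η :=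
    (ENNReal.ofReal_lt_ofReal_iff hη).2 (half_lt_self hη)
  refine lt_of_le_of_lt ?_ hlt
  have hweights := ofReal_mul_tsum_exp_le_one (b := m ^ 2 * a ^ 2 / 2) (by positivity)
  calc Wxya x y m a Kᶜ
      = ENNReal.ofReal (1 - Real.exp (-m ^ 2 * a ^ 2 / 2)) * ∑' N : ℕ,
          ENNReal.ofReal (Real.exp (-m ^ 2 * a ^ 2 * (N + 1) / 2)) * WxyaN x y a N Kᶜ := by
        simp [Wxya, Measure.sum_apply _ hKm.compl]
    _ ≤ ENNReal.ofReal (1 - Real.exp (-m ^ 2 * a ^ 2 / 2)) * ∑' N : ℕ,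
          ENNReal.ofReal (Real.exp (-m ^ 2 * a ^ 2 * (N + 1) / 2)) * ENNReal.ofReal (η / 2) := by
        gcongr with N
        exact hKle a ha N
    _ = (ENNReal.ofReal (1 - Real.exp (-(m ^ 2 * a ^ 2 / 2))) * ∑' N : ℕ,
          ENNReal.ofReal (Real.exp (-(m ^ 2 * a ^ 2 / 2) * (N + 1)))) *
            ENNReal.ofReal (η / 2) := by
        have h₁ : -m ^ 2 * a ^ 2 / 2 = -(m ^ 2 * a ^ 2 / 2) := by ring
        have h₂ : ∀ N : ℕ, -m ^ 2 * a ^ 2 * (N + 1) / 2 = -(m ^ 2 * a ^ 2 / 2) * (N + 1) :=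
          fun N => by ring
        simp_rw [h₁, h₂, ENNReal.tsum_mul_right, mul_assoc]
    _ ≤ ENNReal.ofReal (η / 2) := mul_le_of_le_one_left zero_le hweights

end
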